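/- For all x ≥ 1, √(2π(x+1/6))·(x/e)^x ≤ Γ(1+x) ≤ √(2π(x + e²/(2π) − 1))·(x/e)^x. -/

import Mathlib

open Real

open Filter Set Topology

/-!
Let `E x` be the logarithm of `Γ(1 + x) / (√(2π) (x / e) ^ x)` and `a = e² / (2π) - 1`; the claim is
`log (x + 1 / 6) / 2 ≤ E x ≤ log (x + a) / 2`, with equality on the right at `x = 1`. By the
functional equation `E x - E (x + 1)` is elementary, and by Stirling's formula
`E (x + n) - log (x + n) / 2 → 0`. Hence comparing `E` with an elementary function
asymptotic to `log x / 2`, and even showing that their difference is monotone, only takes a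
comparison of unit steps.

With `S x = log x / 2 + 1 / (12 x) - 1 / (360 x³)`, this shows that `S - E` is increasing, hence
nonpositive, so that `log (x + 1 / 6) / 2 ≤ S x ≤ E x`. On `[1, 2]` also `log (x + a) / 2 - S x` is
increasing; adding `S - E`, so is `log (x + a) / 2 - E x`, which is zero at `1`. On `[2, ∞)` the
cruder bound `E x ≤ log x / 2 + 1 / (12 x)` suffices.
-/

theorem log_add_one_sub_log_le {x : ℝ} (hx : 0 < x) (n : ℕ) :
    log (x + 1) - log x ≤
      ∑ k ∈ Finset.range (n + 1), 2 * (1 / (2 * k + 1)) * (1 / (2 * x + 1)) ^ (2 * k + 1)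
        + (1 / (2 * x + 1)) ^ (2 * n + 1) / (2 * (2 * n + 3) * x * (x + 1)) := by
  set v := 1 / (2 * x + 1) with hv
  have hv_sq : v ^ 2 < 1 := by
    rw [hv, div_pow, div_lt_one (by positivity)]
    nlinarith
  have hlog : log (1 + x⁻¹) = log (x + 1) - log x := by
    rw [← log_div (by positivity) hx.ne']
    congr 1
    field_simp
  have htail := hasSum_log_one_add_inv hx
  rw [hlog, ← hv, ← hasSum_nat_add_iff' (n + 1)] at htail
  have hgeom := (hasSum_geometric_of_lt_one (sq_nonneg v) hv_sq).mul_left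
    (2 * (1 / (2 * n + 3)) * v ^ (2 * n + 3))
  have hterm (k : ℕ) : 2 * (1 / (2 * ((k + (n + 1) : ℕ) : ℝ) + 1)) * v ^ (2 * (k + (n + 1)) + 1)
      ≤ 2 * (1 / (2 * n + 3)) * v ^ (2 * n + 3) * (v ^ 2) ^ k := by
    rw [← pow_mul, mul_assoc _ (v ^ _), ← pow_add,
      show 2 * (k + (n + 1)) + 1 = 2 * n + 3 + 2 * k by ring]
    have hcast : 2 * (n : ℝ) + 3 ≤ 2 * ((k + (n + 1) : ℕ) : ℝ) + 1 := by
      push_cast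
      linarith [k.cast_nonneg (α := ℝ)]
    gcongr
  have hremainder : 2 * (1 / (2 * n + 3)) * v ^ (2 * n + 3) * (1 - v ^ 2)⁻¹
      = v ^ (2 * n + 1) / (2 * (2 * n + 3) * x * (x + 1)) := by
    have : 1 - v ^ 2 = 4 * x * (x + 1) * v ^ 2 := by
      rw [hv]
      field_simp
      ring
    rw [this, pow_add v (2 * n) 3, pow_add v (2 * n) 1]
    field_simp
    ring
  rw [← sub_le_iff_le_add', ← hremainder]
  exact hasSum_le hterm htail hgeom

section UnitStep

variable {f : ℝ → ℝ} {l : ℝ}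

theorem le_of_add_one_le_of_tendsto {x : ℝ} (hf : ∀ t, x ≤ t → f (t + 1) ≤ f t)
    (hlim : Tendsto (fun n : ℕ => f (x + n)) atTop (𝓝 l)) : l ≤ f x := by
  have hanti : Antitone fun n : ℕ => f (x + n) := antitone_nat_of_succ_le fun n => by
    simpa [add_assoc] using hf (x + n) (by simp)
  simpa using hanti.le_of_tendsto hlim 0

theorem monotoneOn_of_monotoneOn_sub_add_one {c : ℝ}
    (hf : MonotoneOn (fun t => f t - f (t + 1)) (Ioi c))
    (hlim : ∀ x, c < x → Tendsto (fun n : ℕ => f (x + n)) atTop (𝓝 l)) :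
    MonotoneOn f (Ioi c) := by
  intro x hx y hy hxy
  rw [mem_Ioi] at hx hy
  have hlim_sub : Tendsto (fun n : ℕ => f (x + n + (y - x)) - f (x + n)) atTop (𝓝 0) := by
    simpa [add_sub_cancel, add_right_comm x] using (hlim y hy).sub (hlim x hx)
  have hstep (t : ℝ) (ht : x ≤ t) : f (t + 1 + (y - x)) - f (t + 1) ≤ f (t + (y - x)) - f t := by
    have hct : c < t := hx.trans_le ht
    have htt : t ≤ t + (y - x) := by linarith
    have hmono := hf hct (hct.trans_le htt) htt
    rw [add_right_comm]
    linarith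
  simpa using le_of_add_one_le_of_tendsto (f := fun t => f (t + (y - x)) - f t) hstep hlim_sub

end UnitStep

theorem tendsto_add_mul_log_add_sub_log (a b : ℝ) :
    Tendsto (fun t => (t + b) * (log (t + a) - log t)) atTop (𝓝 a) := by
  have hlim := (tendsto_mul_log_one_add_div_atTop a).add
    ((tendsto_log_comp_add_sub_log a).const_mul b)
  rw [mul_zero, add_zero] at hlim
  refine hlim.congr' ?_
  filter_upwards [eventually_gt_atTop 0, eventually_gt_atTop (-a)] with t ht hta
  have hlog : log (1 + a / t) = log (t + a) - log t := by
    rw [← log_div (by linarith) ht.ne', add_div, div_self ht.ne']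
  rw [hlog]
  ring

theorem log_Gamma_add_one {x : ℝ} (hx : 0 < x) :
    log (Gamma (x + 1)) = log (Gamma x) + log x := by
  rw [Gamma_add_one hx.ne', log_mul hx.ne' (Gamma_pos_of_pos hx).ne', add_comm]

theorem tendsto_log_Gamma_add_natCast_sub {x : ℝ} (hx : 0 < x) :
    Tendsto (fun n : ℕ => log (Gamma (x + n + 1)) - log n.factorial - x * log n)
      atTop (𝓝 0) := by
  have hlim := (BohrMollerup.tendsto_log_gamma hx).const_sub (log (Gamma x))
  rw [sub_self] at hlim
  refine hlim.congr fun n => ?_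
  have hshift := BohrMollerup.f_add_nat_eq (f := log ∘ Gamma) log_Gamma_add_one hx (n + 1)
  simp only [Function.comp_apply, Nat.cast_add_one, ← add_assoc] at hshift
  rw [hshift, BohrMollerup.logGammaSeq]
  ring

theorem tendsto_log_factorial_sub :
    Tendsto (fun n : ℕ => log n.factorial - ((n + 1 / 2) * log n - n + log (2 * π) / 2))
      atTop (𝓝 0) := by
  have hlim := (Stirling.tendsto_stirlingSeq_sqrt_pi.log (by positivity)).sub_const (log √π)
  rw [sub_self] at hlim
  refine hlim.congr' ?_
  filter_upwards [eventually_ne_atTop 0] with n hn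
  have hn' : (n : ℝ) ≠ 0 := Nat.cast_ne_zero.2 hn
  rw [Stirling.log_stirlingSeq_formula, log_mul two_ne_zero hn', log_mul two_ne_zero pi_ne_zero,
    log_div hn' (exp_ne_zero 1), log_exp, log_sqrt pi_pos.le]
  ring

/-- The logarithm of the ratio of `Γ(1 + x)` to `√(2π) (x / e) ^ x`, for `x > 0`. The denominator is
Stirling's approximation without its factor `√x`, which the bounds below replace by `√(x + c)`. -/
noncomputable def logStirlingRatio (x : ℝ) : ℝ :=
  log (Gamma (1 + x) / (√(2 * π) * (x / exp 1) ^ x))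

theorem logStirlingRatio_eq {x : ℝ} (hx : 0 < x) :
    logStirlingRatio x = log (Gamma (1 + x)) - x * log x + x - log (2 * π) / 2 := by
  have hΓ : 0 < Gamma (1 + x) := Gamma_pos_of_pos (by positivity)
  rw [logStirlingRatio, log_div hΓ.ne' (by positivity), log_mul (by positivity) (by positivity),
    log_sqrt (by positivity), log_rpow (by positivity), log_div hx.ne' (exp_ne_zero 1), log_exp]
  ring

theorem logStirlingRatio_one :
    logStirlingRatio 1 = log (1 + (exp 1 ^ 2 / (2 * π) - 1)) / 2 := by
  rw [logStirlingRatio_eq one_pos, add_sub_cancel, log_div (by positivity) (by positivity),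
    log_pow, log_exp, one_add_one_eq_two, Gamma_two, log_one]
  push_cast
  ring

section Comparison

variable {x b : ℝ}

theorem sqrt_mul_mul_rpow_eq (hb : 0 < b) :
    √(2 * π * b) * (x / exp 1) ^ x = √b * (√(2 * π) * (x / exp 1) ^ x) := by
  rw [mul_comm (2 * π), sqrt_mul hb.le, mul_assoc]

theorem half_log_le_logStirlingRatio_iff (hx : 0 < x) (hb : 0 < b) :
    log b / 2 ≤ logStirlingRatio x ↔ √(2 * π * b) * (x / exp 1) ^ x ≤ Gamma (1 + x) := by
  rw [logStirlingRatio, ← log_sqrt hb.le, log_le_log_iff (by positivity) (by positivity),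
    le_div_iff₀ (by positivity), sqrt_mul_mul_rpow_eq hb]

theorem logStirlingRatio_le_half_log_iff (hx : 0 < x) (hb : 0 < b) :
    logStirlingRatio x ≤ log b / 2 ↔ Gamma (1 + x) ≤ √(2 * π * b) * (x / exp 1) ^ x := by
  rw [logStirlingRatio, ← log_sqrt hb.le, log_le_log_iff (by positivity) (by positivity),
    div_le_iff₀ (by positivity), sqrt_mul_mul_rpow_eq hb]

end Comparison

theorem logStirlingRatio_sub_add_one {x : ℝ} (hx : 0 < x) :
    logStirlingRatio x - logStirlingRatio (x + 1) = x * (log (x + 1) - log x) - 1 := by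
  rw [logStirlingRatio_eq hx, logStirlingRatio_eq (by positivity), ← add_assoc 1 x,
    log_Gamma_add_one (by positivity), add_comm 1 x]
  ring

theorem tendsto_logStirlingRatio_add_natCast_sub_half_log {x : ℝ} (hx : 0 < x) :
    Tendsto (fun n : ℕ => logStirlingRatio (x + n) - log (x + n) / 2) atTop (𝓝 0) := by
  have hlog := (tendsto_add_mul_log_add_sub_log x (x + 1 / 2)).comp tendsto_natCast_atTop_atTop
  have hlim := ((tendsto_log_Gamma_add_natCast_sub hx).add tendsto_log_factorial_sub).add
    (hlog.const_sub x)
  rw [add_zero, sub_self, add_zero] at hlim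
  refine hlim.congr fun n => ?_
  rw [logStirlingRatio_eq (by positivity), Function.comp_apply, add_comm 1, add_comm (n : ℝ) x]
  ring

theorem tendsto_sub_logStirlingRatio_add_natCast {g : ℝ → ℝ}
    (hg : Tendsto (fun t => g t - log t / 2) atTop (𝓝 0)) {x : ℝ} (hx : 0 < x) :
    Tendsto (fun n : ℕ => g (x + n) - logStirlingRatio (x + n)) atTop (𝓝 0) := by
  have hshift : Tendsto (fun n : ℕ => x + (n : ℝ)) atTop atTop :=
    tendsto_atTop_add_const_left _ _ tendsto_natCast_atTop_atTop
  simpa using (hg.comp hshift).sub (tendsto_logStirlingRatio_add_natCast_sub_half_log hx)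

theorem logStirlingRatio_le_half_log_add_inv {x : ℝ} (hx : 0 < x) :
    logStirlingRatio x ≤ log x / 2 + 1 / (12 * x) := by
  have hlim := tendsto_sub_logStirlingRatio_add_natCast
    (g := fun t => log t / 2 + 1 / (12 * t)) (by
      simpa using (tendsto_inv_atTop_zero (𝕜 := ℝ)).mul_const (12⁻¹)) hx
  refine sub_nonneg.1 (le_of_add_one_le_of_tendsto
    (f := fun t => log t / 2 + 1 / (12 * t) - logStirlingRatio t) (fun t ht => ?_) hlim)
  have ht0 : 0 < t := hx.trans_le ht
  have hlog : (t + 1 / 2) * (log (t + 1) - log t) ≤ 1 + 1 / (12 * t) - 1 / (12 * (t + 1)) := by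
    calc (t + 1 / 2) * (log (t + 1) - log t)
        ≤ (t + 1 / 2) * (2 * (1 / (2 * t + 1)) + 1 / (2 * t + 1) / (6 * t * (t + 1))) := by
          gcongr
          exact (log_add_one_sub_log_le ht0 0).trans_eq (by norm_num)
      _ = 1 + 1 / (12 * t) - 1 / (12 * (t + 1)) := by
          field_simp
          ring
  linarith [logStirlingRatio_sub_add_one ht0]

/-- The Stirling series of `logStirlingRatio` truncated after the `x⁻³` term. -/
noncomputable def stirlingApprox (x : ℝ) : ℝ :=
  log x / 2 + 1 / (12 * x) - 1 / (360 * x ^ 3)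

theorem hasDerivAt_stirlingApprox {x : ℝ} (hx : 0 < x) :
    HasDerivAt stirlingApprox (1 / (2 * x) - 1 / (12 * x ^ 2) + 1 / (120 * x ^ 4)) x := by
  have hinv := ((hasDerivAt_id x).const_mul 12).fun_inv (by simpa using hx.ne')
  have hinv_cube := ((hasDerivAt_pow 3 x).const_mul 360).fun_inv (by positivity)
  have hderiv := (((hasDerivAt_log hx.ne').div_const 2).add hinv).sub hinv_cube
  refine (hderiv.congr_deriv ?_).congr_of_eventuallyEq (.of_forall fun t => ?_)
  · simp only [id]
    field_simp
    ring
  · simp [stirlingApprox]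

theorem tendsto_stirlingApprox_sub_half_log :
    Tendsto (fun t => stirlingApprox t - log t / 2) atTop (𝓝 0) := by
  have hinv := tendsto_inv_atTop_zero (𝕜 := ℝ)
  have hlim := (hinv.const_mul (1 / 12)).sub ((hinv.pow 3).const_mul (1 / 360))
  rw [mul_zero, zero_pow three_ne_zero, mul_zero, sub_zero] at hlim
  refine hlim.congr fun t => ?_
  rw [stirlingApprox]
  ring

theorem log_add_one_sub_log_le_deriv_stirlingApprox_sub {x : ℝ} (hx : 0 < x) :
    log (x + 1) - log x ≤
      1 / (x + 1) + (deriv stirlingApprox x - deriv stirlingApprox (x + 1)) := by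
  rw [(hasDerivAt_stirlingApprox hx).deriv, (hasDerivAt_stirlingApprox (by positivity)).deriv]
  have hlog : log (x + 1) - log x ≤ 2 / (2 * x + 1) + 2 / (3 * (2 * x + 1) ^ 3)
      + 1 / (10 * x * (x + 1) * (2 * x + 1) ^ 3) := by
    refine (log_add_one_sub_log_le hx 1).trans_eq ?_
    simp only [Finset.sum_range_succ, Finset.sum_range_zero]
    norm_num
    field_simp
  refine hlog.trans (sub_nonneg.1 ?_)
  field_simp
  ring_nf
  positivity

theorem monotoneOn_stirlingApprox_sub_logStirlingRatio :
    MonotoneOn (fun t => stirlingApprox t - logStirlingRatio t) (Ioi 0) := by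
  have hderiv {t : ℝ} (ht : 0 < t) :
      HasDerivAt (fun t => stirlingApprox t - stirlingApprox (t + 1) - t * (log (t + 1) - log t))
        (1 / (t + 1) + (deriv stirlingApprox t - deriv stirlingApprox (t + 1))
          - (log (t + 1) - log t)) t := by
    have ht1 : 0 < t + 1 := by positivity
    have hS := (hasDerivAt_stirlingApprox ht).differentiableAt.hasDerivAt
    have hS1 := (hasDerivAt_stirlingApprox ht1).differentiableAt.hasDerivAt.comp_add_const t 1
    have hlog := ((hasDerivAt_log ht1.ne').comp_add_const t 1).sub (hasDerivAt_log ht.ne')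
    refine ((hS.sub hS1).sub ((hasDerivAt_id t).mul hlog)).congr_deriv ?_
    simp only [id, Pi.sub_apply]
    field_simp
    ring
  have hstep : MonotoneOn (fun t => stirlingApprox t - stirlingApprox (t + 1)
      - t * (log (t + 1) - log t)) (Ioi 0) := by
    refine monotoneOn_of_hasDerivWithinAt_nonneg (convex_Ioi 0)
      (fun t ht => (hderiv ht).continuousAt.continuousWithinAt)
      (fun t ht => (hderiv (interior_subset ht)).hasDerivWithinAt) fun t ht => ?_
    exact sub_nonneg.2 (log_add_one_sub_log_le_deriv_stirlingApprox_sub (interior_subset ht))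
  refine monotoneOn_of_monotoneOn_sub_add_one ((hstep.add_const 1).congr fun t ht => ?_)
    fun x hx => tendsto_sub_logStirlingRatio_add_natCast tendsto_stirlingApprox_sub_half_log hx
  simp only
  linarith [logStirlingRatio_sub_add_one (mem_Ioi.1 ht)]

theorem stirlingApprox_le_logStirlingRatio {x : ℝ} (hx : 0 < x) :
    stirlingApprox x ≤ logStirlingRatio x := by
  have hlim := tendsto_sub_logStirlingRatio_add_natCast tendsto_stirlingApprox_sub_half_log hx
  refine sub_nonpos.1 (ge_of_tendsto' hlim fun n => ?_)
  have hn : x ≤ x + n := by simp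
  exact monotoneOn_stirlingApprox_sub_logStirlingRatio hx (hx.trans_le hn) hn

section HalfLog

variable {a x : ℝ}

theorem hasDerivAt_half_log_add_sub_stirlingApprox (hx : 0 < x) (hxa : 0 < x + a) :
    HasDerivAt (fun t => log (t + a) / 2 - stirlingApprox t)
      ((10 * x ^ 3 - x - a * (60 * x ^ 3 - 10 * x ^ 2 + 1)) / (120 * x ^ 4 * (x + a))) x := by
  have hlog := ((hasDerivAt_log hxa.ne').comp_add_const x a).div_const 2
  refine (hlog.sub (hasDerivAt_stirlingApprox hx)).congr_deriv ?_
  field_simp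
  ring

theorem monotoneOn_half_log_add_sub_stirlingApprox (ha : 0 ≤ a) {D : Set ℝ} (hD : Convex ℝ D)
    (hpos : ∀ t ∈ D, 0 < t)
    (hle : ∀ t ∈ D, a * (60 * t ^ 3 - 10 * t ^ 2 + 1) ≤ 10 * t ^ 3 - t) :
    MonotoneOn (fun t => log (t + a) / 2 - stirlingApprox t) D := by
  have hderiv (t : ℝ) (ht : t ∈ D) := hasDerivAt_half_log_add_sub_stirlingApprox (hpos t ht)
    (add_pos_of_pos_of_nonneg (hpos t ht) ha)
  refine monotoneOn_of_hasDerivWithinAt_nonneg hD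
    (fun t ht => (hderiv t ht).continuousAt.continuousWithinAt)
    (fun t ht => (hderiv t (interior_subset ht)).hasDerivWithinAt) fun t ht => ?_
  have ht0 : 0 < t := hpos t (interior_subset ht)
  exact div_nonneg (sub_nonneg.2 (hle t (interior_subset ht))) (by positivity)

theorem half_log_add_sixth_le_stirlingApprox (hx : 3 / 4 ≤ x) :
    log (x + 1 / 6) / 2 ≤ stirlingApprox x := by
  have hmono : MonotoneOn (fun t => log (t + 1 / 6) / 2 - stirlingApprox t) (Ici (3 / 4)) :=
    monotoneOn_half_log_add_sub_stirlingApprox (by norm_num) (convex_Ici _)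
      (fun t ht => by linarith [mem_Ici.1 ht]) fun t ht => by nlinarith [mem_Ici.1 ht]
  have hlim : Tendsto (fun t => log (t + 1 / 6) / 2 - stirlingApprox t) atTop (𝓝 0) := by
    have := ((tendsto_log_comp_add_sub_log (1 / 6)).div_const 2).sub
      tendsto_stirlingApprox_sub_half_log
    simpa [sub_div] using this
  refine sub_nonpos.1 (ge_of_tendsto hlim ?_)
  filter_upwards [eventually_ge_atTop x] with t hxt
  exact hmono hx (hx.trans hxt) hxt

theorem monotoneOn_half_log_add_sub_logStirlingRatio (ha : 0 ≤ a) (ha' : a ≤ 3 / 17) :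
    MonotoneOn (fun t => log (t + a) / 2 - logStirlingRatio t) (Icc 1 2) := by
  have hmono : MonotoneOn (fun t => log (t + a) / 2 - stirlingApprox t) (Icc 1 2) := by
    refine monotoneOn_half_log_add_sub_stirlingApprox ha (convex_Icc 1 2)
      (fun t ht => one_pos.trans_le ht.1) fun t ⟨h1t, ht2⟩ => ?_
    calc a * (60 * t ^ 3 - 10 * t ^ 2 + 1) ≤ 3 / 17 * (60 * t ^ 3 - 10 * t ^ 2 + 1) := by
          gcongr
          nlinarith [sq_nonneg t]
      _ = 10 * t ^ 3 - t - (t - 1) * (10 * t * (2 - t) + 3) / 17 := by ring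
      _ ≤ 10 * t ^ 3 - t := by
          have : 0 ≤ (t - 1) * (10 * t * (2 - t) + 3) := by
            have : 0 ≤ t * (2 - t) := mul_nonneg (by linarith) (by linarith)
            exact mul_nonneg (by linarith) (by linarith)
          linarith
  have hsum := hmono.add (monotoneOn_stirlingApprox_sub_logStirlingRatio.mono
    fun t ht => one_pos.trans_le ht.1)
  simpa using hsum

theorem half_log_add_inv_le_half_log_add (hx : 0 < x) (ha : 0 ≤ a) (hax : a ≤ (12 * a - 2) * x) :
    log x / 2 + 1 / (12 * x) ≤ log (x + a) / 2 := by
  have hlog : log (x + a) = log x + log (1 + a / x) := by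
    rw [← log_mul hx.ne' (by positivity), mul_add, mul_one, mul_div_cancel₀ _ hx.ne']
  have hinv : 2 * (1 / (12 * x)) ≤ 2 * (a / x) / (a / x + 2) := by
    field_simp
    linarith
  linarith [le_log_one_add_of_nonneg (x := a / x) (by positivity)]

end HalfLog

-- `3 / 17` is the largest `a` for which `log (t + a) / 2 - stirlingApprox t` increases at `t = 1`,
-- and `4 / 23` is the least `a` with `a ≤ (12 * a - 2) * x` at `x = 2`.
theorem exp_one_sq_div_two_pi_sub_one_mem_Icc :
    exp 1 ^ 2 / (2 * π) - 1 ∈ Icc (4 / 23) (3 / 17) := by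
  have he := exp_one_gt_d9
  have he' := exp_one_lt_d9
  have hπ := pi_gt_d6
  have hπ' := pi_lt_d6
  constructor
  · rw [le_sub_iff_add_le, le_div_iff₀ (by positivity)]
    nlinarith
  · rw [sub_le_iff_le_add, div_le_iff₀ (by positivity)]
    nlinarith

theorem logStirlingRatio_le_half_log_add_exp_one_sq_div {x : ℝ} (hx : 1 ≤ x) :
    logStirlingRatio x ≤ log (x + (exp 1 ^ 2 / (2 * π) - 1)) / 2 := by
  obtain ⟨ha, ha'⟩ := exp_one_sq_div_two_pi_sub_one_mem_Icc
  have hone := logStirlingRatio_one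
  set a := exp 1 ^ 2 / (2 * π) - 1
  have ha0 : 0 ≤ a := by linarith
  rcases le_total x 2 with hx2 | hx2
  · have hmono := monotoneOn_half_log_add_sub_logStirlingRatio ha0 ha' ⟨le_rfl, one_le_two⟩
      ⟨hx, hx2⟩ hx
    simp only at hmono
    linarith
  · have hx0 : 0 < x := one_pos.trans_le hx
    exact (logStirlingRatio_le_half_log_add_inv hx0).trans
      (half_log_add_inv_le_half_log_add hx0 ha0 (by nlinarith))

theorem batir_second_inequality (x : ℝ) (hx : 1 ≤ x) :
    Real.sqrt (2 * π * (x + 1/6)) * (x / Real.exp 1) ^ x ≤ Real.Gamma (1 + x) ∧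
    Real.Gamma (1 + x)
      ≤ Real.sqrt (2 * π * (x + Real.exp 1 ^ 2 / (2*π) - 1)) * (x / Real.exp 1) ^ x := by
  have hx0 : 0 < x := one_pos.trans_le hx
  have ha := exp_one_sq_div_two_pi_sub_one_mem_Icc.1
  rw [add_sub_assoc, ← half_log_le_logStirlingRatio_iff hx0 (by positivity),
    ← logStirlingRatio_le_half_log_iff hx0 (by linarith)]
  constructor
  · exact (half_log_add_sixth_le_stirlingApprox (by linarith)).trans
      (stirlingApprox_le_logStirlingRatio hx0)
  · exact logStirlingRatio_le_half_log_add_exp_one_sq_div hx
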